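/- Let X be a quantum-Wajsberg algebra. Then every deductive system of X is commutative, i.e., for every deductive system F and all x, y ∈ X, y→x ∈ F implies (x ∪ y)→x ∈ F. -/

import Mathlib

/-!
In a QW algebra, `x → (x ⊓ y) = x → y`. Indeed `y = 1` in (QW) gives
`x → (x ⊓ (z ⊓ x)) = x → z`, where `x ⊓ (z ⊓ x) = z ⊓ x` because `z ⊓ x ≤ x`, and `z = 1` gives
`x → ((x ⊓ y) ⊓ x) = x → y`, whose left side is `x → (x ⊓ y)` by the previous identity.
By contraposition `(x ∪ y) → x = x* → (x* ⊓ y*) = x* → y* = y → x`, so the hypothesis and the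
conclusion of commutativity are about the same element.
-/

/-- An involutive BE algebra `(X, →, 0, 1)`. -/
structure InvBE (X : Type*) where
  imp : X → X → X
  one : X
  zero : X
  imp_self : ∀ x, imp x x = one
  imp_one : ∀ x, imp x one = one
  one_imp : ∀ x, imp one x = x
  exchange : ∀ x y z, imp x (imp y z) = imp y (imp x z)
  zero_imp : ∀ x, imp zero x = one
  imp_involutive : ∀ x, imp (imp x zero) zero = x

namespace InvBE

variable {X : Type*} (A : InvBE X)

/-- `x* := x → 0`. -/
def neg (x : X) : X := A.imp x A.zero

/-- `x ⊓ y := ((x* → y*) → y*)*`. -/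
def inf (x y : X) : X := A.neg (A.imp (A.imp (A.neg x) (A.neg y)) (A.neg y))

/-- `x ∪ y := (x → y) → y`. -/
def sup (x y : X) : X := A.imp (A.imp x y) y

/-- `x ⊙ y := (x → y*)*`. -/
def odot (x y : X) : X := A.neg (A.imp x (A.neg y))

/-- `x ⊕ y := (x* ⊙ y*)*`. -/
def oplus (x y : X) : X := A.neg (A.odot (A.neg x) (A.neg y))

/-- `x ≤_Q y` iff `x = x ⊓ y`. -/
def leQ (x y : X) : Prop := x = A.inf x y

/-- `x ≤ y` iff `x → y = 1`. -/
def le (x y : X) : Prop := A.imp x y = A.one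

/-- (IOM): `x ⊓ (y → x) = x` for all `x, y`. -/
def IOM : Prop := ∀ x y, A.inf x (A.imp y x) = x

/-- (QW): `x → ((x ⊓ y) ⊓ (z ⊓ x)) = (x → y) ⊓ (x → z)` for all `x, y, z`. -/
def QW : Prop :=
  ∀ x y z, A.imp x (A.inf (A.inf x y) (A.inf z x)) = A.inf (A.imp x y) (A.imp x z)

/-- A filter: nonempty, closed under `⊙`, upward closed for `≤_Q`. -/
def IsFilter (F : Set X) : Prop :=
  F.Nonempty ∧ (∀ x ∈ F, ∀ y ∈ F, A.odot x y ∈ F) ∧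
    (∀ x ∈ F, ∀ y : X, A.leQ x y → y ∈ F)

/-- A deductive system: contains `1` and is closed under modus ponens. -/
def IsDS (F : Set X) : Prop :=
  A.one ∈ F ∧ ∀ x y : X, x ∈ F → A.imp x y ∈ F → y ∈ F

/-- `pow x n` is the `⊙`-product of `n + 1` copies of `x`, i.e. `x^(n+1)`. -/
def pow (x : X) : ℕ → X
  | 0 => x
  | n + 1 => A.odot x (pow x n)

/-- A maximal filter: proper and not contained in any other proper filter. -/
def IsMaximalFilter (F : Set X) : Prop :=
  A.IsFilter F ∧ F ≠ Set.univ ∧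
    ∀ G : Set X, A.IsFilter G → F ⊆ G → G ≠ Set.univ → G = F

/-- A strongly maximal filter: for every `x ∉ F` there is `n ≥ 1` with `(xⁿ)* ∈ F`. -/
def IsStronglyMaximalFilter (F : Set X) : Prop :=
  A.IsFilter F ∧ ∀ x : X, x ∉ F → ∃ n : ℕ, A.neg (A.pow x n) ∈ F

/-- `x ≡_F y` iff there is `f` with `x, y ≤_Q f` and `f → x, f → y ∈ F`. -/
def cong (F : Set X) (x y : X) : Prop :=
  ∃ f : X, A.leQ x f ∧ A.leQ y f ∧ A.imp f x ∈ F ∧ A.imp f y ∈ F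

end InvBE

namespace InvBE

variable {X : Type*} (A : InvBE X)

lemma neg_neg' (x : X) : A.neg (A.neg x) = x := A.imp_involutive x

lemma neg_imp_neg (x y : X) : A.imp (A.neg x) (A.neg y) = A.imp y x := by
  have h := A.exchange (A.neg x) y A.zero
  have h2 : A.imp (A.neg x) A.zero = x := A.imp_involutive x
  rw [h2] at h
  exact h

lemma inf_eq (x y : X) : A.inf x y = A.neg (A.imp (A.imp y x) (A.neg y)) := by
  rw [inf, neg_imp_neg]

lemma neg_one : A.neg A.one = A.zero := A.one_imp _

lemma inf_one (x : X) : A.inf x A.one = x := by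
  rw [inf_eq, A.one_imp, neg_one]
  exact A.imp_involutive x

lemma one_inf (x : X) : A.inf A.one x = x := by
  rw [inf_eq, A.imp_one, A.one_imp, neg_neg']

lemma inf_imp_right (z x : X) : A.imp (A.inf z x) x = A.one := by
  rw [← neg_imp_neg, inf_eq, neg_neg', A.exchange, A.imp_self, A.imp_one]

/-- The order of the meet matters: `x ⊓ y = x` is the relation `x ≤_Q y`, in general stronger
than `x → y = 1`. -/
lemma inf_eq_of_le {x y : X} (h : A.imp x y = A.one) : A.inf y x = x := by
  rw [inf_eq, h, A.one_imp, neg_neg']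

lemma imp_inf_right (hA : A.QW) (x z : X) : A.imp x (A.inf z x) = A.imp x z := by
  have h := hA x A.one z
  rwa [inf_one, A.imp_one, one_inf, A.inf_eq_of_le (A.inf_imp_right z x)] at h

lemma imp_inf_left (hA : A.QW) (x y : X) : A.imp x (A.inf x y) = A.imp x y := by
  have h := hA x y A.one
  rwa [one_inf, A.imp_one, inf_one, A.imp_inf_right hA] at h

lemma sup_imp_left (hA : A.QW) (x y : X) : A.imp (A.sup x y) x = A.imp y x := by
  have h := A.imp_inf_left hA (A.neg x) (A.neg y)
  rwa [inf, neg_neg', neg_neg', neg_imp_neg, neg_imp_neg] at h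

end InvBE

/-- In a QW algebra, every deductive system is commutative:
`y → x ∈ F` implies `(x ∪ y) → x ∈ F`. -/
theorem stmt_18 {X : Type*} (A : InvBE X) (hA : A.QW) :
    ∀ F : Set X, A.IsDS F →
      ∀ x y : X, A.imp y x ∈ F → A.imp (A.sup x y) x ∈ F := by
  intro F _ x y h
  rwa [A.sup_imp_left hA]
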